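/- arXiv:2506.17197 — 2 statements merged into one kernel-verified Lean document; each statement's English description precedes it below -/
import Mathlib

section
/- Let d ≥ 1, let S be a finite nonempty set, and let Q be a σ-finite measure on (ℝ^d)^S. Let B : ℝ^d → [0,∞) be measurable with z_B := ∫ exp(−∑_{i∈S} B(x_i)) dQ(x) ∈ (0,∞), and for each i ∈ S let μ_i be a probability measure on ℝ^d with ∫ B dμ_i < ∞. Let Γ = { Π : Π a probability measure on (ℝ^d)^S with marginal at each i ∈ S equal to μ_i }. Then on Γ ∩ { Π : Π ≪ Q }, the quantity KL(Π ‖ Q) := ∫ log(dΠ/dQ) dΠ is well-defined in (−∞,+∞] and bounded below, and if some Π⁰ ∈ Γ satisfies KL(Π⁰ ‖ Q) < ∞, then there exists a minimiser of KL(· ‖ Q) over Γ, which is unique. -/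
open MeasureTheory ProbabilityTheory Classical

open scoped ENNReal

/-- Kullback-Leibler divergence of a probability measure `μ` with respect to a σ-finite
measure `ν`, valued in `(-∞, +∞]`: `KL(μ‖ν) = ∫ log(dμ/dν) dμ` when `μ ≪ ν` and the
log-likelihood ratio is `μ`-integrable, and `+∞` otherwise (in particular when `μ` is not
absolutely continuous with respect to `ν`). -/
noncomputable def KL {α : Type*} [MeasurableSpace α] (μ ν : Measure α) : EReal :=
  if μ ≪ ν ∧ Integrable (llr μ ν) μ then ((∫ x, llr μ ν x ∂μ : ℝ) : EReal) else ⊤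

namespace KLMin
open InformationTheory Filter

lemma mul_log_lower {a m : ℝ} (ha : 0 ≤ a) (hm : 0 < m) :
    2 * a - 2 * (√a * √m) ≤ a * Real.log a - a * Real.log m := by
  rcases ha.eq_or_lt with rfl | ha
  · simp
  have hsa := Real.sqrt_pos.2 ha
  have hsm := Real.sqrt_pos.2 hm
  have h := Real.log_le_sub_one_of_pos (div_pos hsm hsa)
  rw [Real.log_div hsm.ne' hsa.ne', Real.log_sqrt ha.le, Real.log_sqrt hm.le] at h
  have h2 := mul_le_mul_of_nonneg_left h (by positivity : 0 ≤ 2 * a)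
  have h3 : 2 * a * (√m / √a - 1) = 2 * (√a * √m) - 2 * a := by
    have : a = √a * √a := (Real.mul_self_sqrt ha.le).symm
    have h4 : a * (√m / √a) = √a * √m := by
      nth_rw 1 [this]
      field_simp
    linear_combination 2 * h4
  linarith

lemma klFun_mid {a b : ℝ} (ha : 0 ≤ a) (hb : 0 ≤ b) :
    2 * klFun ((a + b) / 2) + (√a - √b) ^ 2 / 2 ≤ klFun a + klFun b := by
  rcases (by positivity : 0 ≤ (a + b) / 2).eq_or_lt with h0 | hm
  · have h1 : a = 0 := by linarith
    have h2 : b = 0 := by linarith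
    subst h1; subst h2
    simp [klFun]; norm_num
  have h1 := mul_log_lower ha hm
  have h2 := mul_log_lower hb hm
  simp only [klFun_apply]
  have e1 := Real.sq_sqrt ha
  have e2 := Real.sq_sqrt hb
  have e3 := Real.sq_sqrt hm.le
  nlinarith [sq_nonneg (√a + √b - 2 * √((a + b) / 2))]

variable {α : Type*} [MeasurableSpace α]

noncomputable def sq (P ν : Measure α) (x : α) : ℝ := √(P.rnDeriv ν x).toReal

lemma sq_meas (P ν : Measure α) : Measurable (sq P ν) := by
  unfold sq; fun_prop

lemma sq_sq (P ν : Measure α) (x : α) : sq P ν x ^ 2 = (P.rnDeriv ν x).toReal :=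
  Real.sq_sqrt ENNReal.toReal_nonneg

lemma sq_memLp (P ν : Measure α) [IsFiniteMeasure P] : MemLp (sq P ν) 2 ν := by
  rw [memLp_two_iff_integrable_sq (sq_meas P ν).aestronglyMeasurable]
  simp only [sq_sq]
  exact Measure.integrable_toReal_rnDeriv

lemma eLpNorm_sq (f : α → ℝ) (ν : Measure α) :
    eLpNorm f 2 ν ^ 2 = ∫⁻ x, ENNReal.ofReal (f x ^ 2) ∂ν := by
  have := eLpNorm_nnreal_pow_eq_lintegral (f := f) (μ := ν) (p := 2) two_ne_zero
  simp only [NNReal.coe_ofNat, ENNReal.rpow_two] at this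
  rw [ENNReal.coe_ofNat] at this
  rw [this]
  refine lintegral_congr fun x => ?_
  rw [← enorm_pow, Real.enorm_of_nonneg (by positivity)]

lemma klDiv_mid (P P' ν : Measure α) [IsFiniteMeasure P] [IsFiniteMeasure P'] [IsFiniteMeasure ν]
    (hP : P ≪ ν) (hP' : P' ≪ ν) :
    2 * klDiv ((2⁻¹ : ℝ≥0∞) • P + (2⁻¹ : ℝ≥0∞) • P') ν
      + 2⁻¹ * eLpNorm (sq P ν - sq P' ν) 2 ν ^ 2 ≤ klDiv P ν + klDiv P' ν := by
  have hf1 : IsFiniteMeasure ((2⁻¹ : ℝ≥0∞) • P) := Measure.smul_finite P (by simp)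
  have hf2 : IsFiniteMeasure ((2⁻¹ : ℝ≥0∞) • P') := Measure.smul_finite P' (by simp)
  have hac : (2⁻¹ : ℝ≥0∞) • P + (2⁻¹ : ℝ≥0∞) • P' ≪ ν :=
    Measure.AbsolutelyContinuous.add_left (hP.smul_left _) (hP'.smul_left _)
  rw [klDiv_eq_lintegral_klFun_of_ac hac, klDiv_eq_lintegral_klFun_of_ac hP,
    klDiv_eq_lintegral_klFun_of_ac hP', eLpNorm_sq, ← lintegral_const_mul' _ _ (by simp),
    ← lintegral_const_mul' _ _ (by simp), ← lintegral_add_left (by fun_prop),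
    ← lintegral_add_left (by fun_prop)]
  refine lintegral_mono_ae ?_
  filter_upwards [Measure.rnDeriv_add ((2⁻¹ : ℝ≥0∞) • P) ((2⁻¹ : ℝ≥0∞) • P') ν,
    Measure.rnDeriv_smul_left_of_ne_top P ν (r := 2⁻¹) (by simp),
    Measure.rnDeriv_smul_left_of_ne_top P' ν (r := 2⁻¹) (by simp),
    P.rnDeriv_lt_top ν, P'.rnDeriv_lt_top ν] with x h1 h2 h3 h4 h5
  have h6 : ((((2⁻¹ : ℝ≥0∞) • P + (2⁻¹ : ℝ≥0∞) • P').rnDeriv ν) x).toReal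
      = ((P.rnDeriv ν x).toReal + (P'.rnDeriv ν x).toReal) / 2 := by
    rw [h1, Pi.add_apply, h2, h3]
    simp only [Pi.smul_apply, smul_eq_mul]
    rw [ENNReal.toReal_add (ENNReal.mul_ne_top (by simp) h4.ne)
      (ENNReal.mul_ne_top (by simp) h5.ne)]
    simp
    ring
  rw [h6]
  have ha : 0 ≤ (P.rnDeriv ν x).toReal := ENNReal.toReal_nonneg
  have hb : 0 ≤ (P'.rnDeriv ν x).toReal := ENNReal.toReal_nonneg
  have e2 : (2 : ℝ≥0∞) = ENNReal.ofReal 2 := by simp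
  have e3 : (2⁻¹ : ℝ≥0∞) = ENNReal.ofReal (2⁻¹) := by
    rw [ENNReal.ofReal_inv_of_pos two_pos]; simp
  rw [e3, e2, ← ENNReal.ofReal_mul (by norm_num), ← ENNReal.ofReal_mul (by norm_num),
    ← ENNReal.ofReal_add (mul_nonneg two_pos.le (klFun_nonneg (by positivity))) (by positivity),
    ← ENNReal.ofReal_add (klFun_nonneg ha) (klFun_nonneg hb)]
  refine ENNReal.ofReal_le_ofReal ?_
  have := klFun_mid ha hb
  simp only [Pi.sub_apply, sq]
  linarith

lemma eq_of_sq_eq (P P' ν : Measure α) [IsFiniteMeasure P] [IsFiniteMeasure P']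
    [IsFiniteMeasure ν] (hP : P ≪ ν) (hP' : P' ≪ ν)
    (h : eLpNorm (sq P ν - sq P' ν) 2 ν = 0) : P = P' := by
  rw [eLpNorm_eq_zero_iff ((sq_meas P ν).sub (sq_meas P' ν)).aestronglyMeasurable (by simp)] at h
  rw [← Measure.withDensity_rnDeriv_eq P ν hP, ← Measure.withDensity_rnDeriv_eq P' ν hP']
  refine withDensity_congr_ae ?_
  filter_upwards [h, P.rnDeriv_lt_top ν, P'.rnDeriv_lt_top ν] with x h h4 h5
  have : sq P ν x = sq P' ν x := by simpa [sub_eq_zero] using h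
  rw [← ENNReal.toReal_eq_toReal_iff' h4.ne h5.ne, ← sq_sq, ← sq_sq, this]

lemma tendsto_setLIntegral {ν : Measure α} {s : ℕ → α → ℝ} {g : α → ℝ}
    (hs : ∀ n, MemLp (s n) 2 ν) (hg : MemLp g 2 ν)
    (h : Tendsto (fun n => eLpNorm (s n - g) 2 ν) atTop (nhds 0)) (A : Set α) :
    Tendsto (fun n => ∫⁻ x in A, ENNReal.ofReal (s n x ^ 2) ∂ν) atTop
      (nhds (∫⁻ x in A, ENNReal.ofReal (g x ^ 2) ∂ν)) := by
  simp only [← eLpNorm_sq]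
  have h' : Tendsto (fun n => eLpNorm (s n - g) 2 (ν.restrict A)) atTop (nhds 0) :=
    tendsto_of_tendsto_of_tendsto_of_le_of_le tendsto_const_nhds h (fun _ => bot_le)
      (fun n => eLpNorm_restrict_le _ _ _ _)
  have hsA := fun n => (hs n).restrict A
  have hgA := hg.restrict A
  have := (Lp.tendsto_Lp_iff_tendsto_eLpNorm'' s hsA g hgA).2 h'
  have h2 := this.norm
  simp only [Lp.norm_toLp] at h2
  refine ENNReal.Tendsto.pow ?_
  exact (ENNReal.tendsto_toReal_iff (fun n => (hsA n).eLpNorm_ne_top) hgA.eLpNorm_ne_top).1 h2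

theorem exists_unique_klDiv (ν : Measure α) [IsFiniteMeasure ν] (C : Set (Measure α))
    (hprob : ∀ P ∈ C, IsProbabilityMeasure P)
    (hmid : ∀ P ∈ C, ∀ P' ∈ C, (2⁻¹ : ℝ≥0∞) • P + (2⁻¹ : ℝ≥0∞) • P' ∈ C)
    (hclosed : ∀ (p : ℕ → Measure α) (P : Measure α), (∀ n, p n ∈ C) →
      (∀ A, MeasurableSet A → Tendsto (fun n => p n A) atTop (nhds (P A))) → P ∈ C)
    (hfin : ∃ P₀ ∈ C, klDiv P₀ ν ≠ ∞) :
    ∃ Pm ∈ C, (∀ P ∈ C, klDiv Pm ν ≤ klDiv P ν) ∧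
      ∀ P' ∈ C, (∀ P ∈ C, klDiv P' ν ≤ klDiv P ν) → P' = Pm := by
  obtain ⟨P₀, hP₀, hP₀fin⟩ := hfin
  set I : ℝ≥0∞ := ⨅ P ∈ C, klDiv P ν with hI
  have hIle : ∀ P ∈ C, I ≤ klDiv P ν := fun P hP => iInf₂_le P hP
  have hItop : I ≠ ∞ := ne_top_of_le_ne_top hP₀fin (hIle P₀ hP₀)
  -- gap estimate
  have gap : ∀ P ∈ C, ∀ P' ∈ C, ∀ ε : ℝ≥0∞, ε ≠ ∞ → klDiv P ν ≤ I + ε → klDiv P' ν ≤ I + ε →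
      eLpNorm (sq P ν - sq P' ν) 2 ν ^ 2 ≤ 4 * ε := by
    intro P hP P' hP' ε hε h1 h2
    have := hprob P hP
    have := hprob P' hP'
    have ac1 := (klDiv_ne_top_iff.1 (ne_top_of_le_ne_top (by finiteness) h1)).1
    have ac2 := (klDiv_ne_top_iff.1 (ne_top_of_le_ne_top (by finiteness) h2)).1
    have h3 := klDiv_mid P P' ν ac1 ac2
    have h4 := hIle _ (hmid P hP P' hP')
    have h5 : 2 * I + 2⁻¹ * eLpNorm (sq P ν - sq P' ν) 2 ν ^ 2 ≤ 2 * I + 2 * ε := by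
      calc _ ≤ _ := by gcongr
        _ ≤ _ := h3
        _ ≤ (I + ε) + (I + ε) := by gcongr
        _ = _ := by ring
    have h6 := (ENNReal.add_le_add_iff_left (by finiteness)).1 h5
    calc eLpNorm (sq P ν - sq P' ν) 2 ν ^ 2
        = 2 * (2⁻¹ * eLpNorm (sq P ν - sq P' ν) 2 ν ^ 2) := by
          rw [← mul_assoc, ENNReal.mul_inv_cancel (by simp) (by simp), one_mul]
      _ ≤ 2 * (2 * ε) := by gcongr
      _ = 4 * ε := by ring
  -- existence
  have hex : ∃ Pm ∈ C, klDiv Pm ν ≤ I := by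
    have hseq : ∀ n : ℕ, ∃ P ∈ C, klDiv P ν ≤ I + (n : ℝ≥0∞)⁻¹ ∧ klDiv P ν ≠ ∞ := by
      intro n
      have : I < I + (n : ℝ≥0∞)⁻¹ := ENNReal.lt_add_right hItop (by simp)
      rw [hI] at this
      obtain ⟨P, hP⟩ := iInf_lt_iff.1 this
      obtain ⟨hPC, hP⟩ := iInf_lt_iff.1 hP
      exact ⟨P, hPC, hP.le, hP.ne_top⟩
    choose p hpC hp hptop using hseq
    have hpprob := fun n => hprob _ (hpC n)
    have hs := fun n => sq_memLp (p n) ν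
    have hinv : Tendsto (fun n : ℕ => 4 * (n : ℝ≥0∞)⁻¹) atTop (nhds 0) := by
      have := ENNReal.Tendsto.const_mul (a := 4) ENNReal.tendsto_inv_nat_nhds_zero
        (Or.inr (by simp))
      simpa using this
    have hcau : CauchySeq (fun n => (hs n).toLp (sq (p n) ν)) := by
      rw [EMetric.cauchySeq_iff]
      intro ε hε
      have hε2 : 0 < ε ^ 2 := by positivity
      obtain ⟨N, hN⟩ := ((hinv.eventually_lt_const hε2).and (eventually_ge_atTop 1)).exists
      refine ⟨N, fun m hm n hn => ?_⟩
      rw [Lp.edist_toLp_toLp]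
      have hb : ∀ k ≥ N, klDiv (p k) ν ≤ I + (N : ℝ≥0∞)⁻¹ := fun k hk => (hp k).trans (by gcongr)
      have := gap _ (hpC m) _ (hpC n) (N : ℝ≥0∞)⁻¹ (by simp; omega) (hb m hm) (hb n hn)
      exact (pow_left_mono 2).reflect_lt (this.trans_lt hN.1)
    obtain ⟨G, hG⟩ := cauchySeq_tendsto_of_complete hcau
    obtain ⟨g, hgm, hgG⟩ : ∃ g : α → ℝ, Measurable g ∧ (G : α → ℝ) =ᵐ[ν] g :=
      ⟨_, (Lp.stronglyMeasurable G).measurable, ae_eq_refl _⟩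
    have hg : MemLp g 2 ν := (memLp_congr_ae hgG).1 (Lp.memLp G)
    have hGg : G = hg.toLp g := by
      apply Lp.ext
      exact hgG.trans hg.coeFn_toLp.symm
    rw [hGg] at hG
    have hL2 := (Lp.tendsto_Lp_iff_tendsto_eLpNorm'' _ hs g hg).1 hG
    set d : α → ℝ≥0∞ := fun x => ENNReal.ofReal (g x ^ 2) with hd
    have hdm : Measurable d := by fun_prop
    have hac : ∀ n, p n ≪ ν := fun n => (klDiv_ne_top_iff.1 (hptop n)).1
    have hpA : ∀ n A, MeasurableSet A → p n A = ∫⁻ x in A, ENNReal.ofReal (sq (p n) ν x ^ 2) ∂ν := by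
      intro n A hA
      conv_lhs => rw [← Measure.withDensity_rnDeriv_eq (p n) ν (hac n), withDensity_apply _ hA]
      refine lintegral_congr_ae (ae_restrict_of_ae ?_)
      filter_upwards [(p n).rnDeriv_lt_top ν] with x hx
      rw [sq_sq, ENNReal.ofReal_toReal hx.ne]
    have hmem : ν.withDensity d ∈ C := by
      refine hclosed p _ hpC fun A hA => ?_
      rw [withDensity_apply _ hA]
      simp only [hpA _ A hA]
      exact tendsto_setLIntegral hs hg hL2 A
    refine ⟨_, hmem, ?_⟩
    have := hprob _ hmem
    rw [klDiv_eq_lintegral_klFun_of_ac (withDensity_absolutelyContinuous _ _)]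
    have hTM := tendstoInMeasure_of_tendsto_eLpNorm (by simp)
      (fun n => (hs n).aestronglyMeasurable) hg.aestronglyMeasurable hL2
    obtain ⟨ns, hns, hae⟩ := hTM.exists_seq_tendsto_ae
    calc ∫⁻ x, ENNReal.ofReal (klFun ((ν.withDensity d).rnDeriv ν x).toReal) ∂ν
        = ∫⁻ x, liminf (fun k => ENNReal.ofReal
            (klFun ((p (ns k)).rnDeriv ν x).toReal)) atTop ∂ν := by
          refine lintegral_congr_ae ?_
          filter_upwards [hae, Measure.rnDeriv_withDensity ν hdm] with x hx hx2
          rw [hx2]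
          refine (Tendsto.liminf_eq ?_).symm
          have : (d x).toReal = g x ^ 2 := ENNReal.toReal_ofReal (by positivity)
          rw [this]
          have h3 := hx.pow 2
          simp only [sq_sq] at h3
          exact ((ENNReal.continuous_ofReal.comp continuous_klFun).tendsto _).comp h3
      _ ≤ liminf (fun k => ∫⁻ x, ENNReal.ofReal
            (klFun ((p (ns k)).rnDeriv ν x).toReal) ∂ν) atTop :=
          lintegral_liminf_le (fun k => by fun_prop)
      _ ≤ liminf (fun k => I + (ns k : ℝ≥0∞)⁻¹) atTop := by
          refine liminf_le_liminf (Eventually.of_forall fun k => ?_)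
          have := hp (ns k)
          rwa [klDiv_eq_lintegral_klFun_of_ac (hac _)] at this
      _ = I := by
          refine Tendsto.liminf_eq ?_
          have := (ENNReal.tendsto_inv_nat_nhds_zero.comp hns.tendsto_atTop).const_add I
          simpa using this
  obtain ⟨Pm, hPm, hle⟩ := hex
  refine ⟨Pm, hPm, fun P hP => hle.trans (hIle P hP), fun P' hP' hmin => ?_⟩
  have hle' : klDiv P' ν ≤ I := (hmin Pm hPm).trans hle
  have := hprob Pm hPm
  have := hprob P' hP'
  have h := gap P' hP' Pm hPm 0 (by simp) (by simpa) (by simpa)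
  refine eq_of_sq_eq P' Pm ν (klDiv_ne_top_iff.1 (ne_top_of_le_ne_top hItop hle')).1
    (klDiv_ne_top_iff.1 (ne_top_of_le_ne_top hItop hle)).1 ?_
  simpa using h

lemma llr_tilt (P Q : Measure α) [IsProbabilityMeasure P] [SigmaFinite Q] (V : α → ℝ)
    (hV : Measurable V) (hac : P ≪ Q) :
    llr P (Q.withDensity fun x => ENNReal.ofReal (Real.exp (-V x))) =ᵐ[P]
      fun x => llr P Q x + V x := by
  have h := Measure.rnDeriv_withDensity_right P Q
    (f := fun x => ENNReal.ofReal (Real.exp (-V x))) (by fun_prop)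
    (Eventually.of_forall fun x => by simp [Real.exp_pos]) (Eventually.of_forall fun x => by simp)
  filter_upwards [hac.ae_le h, Measure.rnDeriv_pos hac, hac.ae_le (P.rnDeriv_lt_top Q)]
    with x h1 h2 h3
  rw [llr, llr, h1, ENNReal.toReal_mul, ENNReal.toReal_inv,
    ENNReal.toReal_ofReal (Real.exp_pos _).le, ← Real.exp_neg, neg_neg,
    Real.log_mul (Real.exp_pos _).ne' (ENNReal.toReal_pos h2.ne' h3.ne).ne', Real.log_exp,
    add_comm]

lemma tilt_ac_iff (P Q : Measure α) (V : α → ℝ) (hV : Measurable V) :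
    P ≪ (Q.withDensity fun x => ENNReal.ofReal (Real.exp (-V x))) ↔ P ≪ Q := by
  refine ⟨fun h => h.trans (withDensity_absolutelyContinuous _ _), fun h => h.trans ?_⟩
  exact withDensity_absolutelyContinuous' (by fun_prop)
    (Eventually.of_forall fun x => by simp [Real.exp_pos])

lemma KL_eq (P Q : Measure α) [IsProbabilityMeasure P] [SigmaFinite Q] (V : α → ℝ)
    (hV : Measurable V) (hVP : Integrable V P) (ν : Measure α) [IsFiniteMeasure ν]
    (hν : ν = Q.withDensity fun x => ENNReal.ofReal (Real.exp (-V x))) :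
    KL P Q = (klDiv P ν : EReal) + ((1 - ν.real Set.univ - ∫ x, V x ∂P : ℝ) : EReal) := by
  have hiff : P ≪ ν ↔ P ≪ Q := by rw [hν]; exact tilt_ac_iff P Q V hV
  have hiff2 : P ≪ Q → (Integrable (llr P ν) P ↔ Integrable (llr P Q) P) := fun hac => by
    have h := llr_tilt P Q V hV hac
    rw [← hν] at h
    rw [integrable_congr h]
    exact integrable_add_iff_integrable_left hVP
  by_cases hc : P ≪ Q ∧ Integrable (llr P Q) P
  · have h := llr_tilt P Q V hV hc.1
    rw [← hν] at h
    have hacν := hiff.2 hc.1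
    have hint := (hiff2 hc.1).2 hc.2
    have h0 := integral_llr_add_sub_measure_univ_nonneg hacν hint
    rw [KL, if_pos hc, klDiv_of_ac_of_integrable hacν hint, EReal.coe_ennreal_ofReal,
      max_eq_left h0, ← EReal.coe_add, integral_congr_ae h, integral_add hc.2 hVP]
    congr 1
    simp
    ring
  · have : klDiv P ν = ∞ := by
      by_contra hne
      have := klDiv_ne_top_iff.1 hne
      exact hc ⟨hiff.1 this.1, (hiff2 (hiff.1 this.1)).1 this.2⟩
    rw [KL, if_neg hc, this, EReal.coe_ennreal_top, EReal.top_add_coe]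

lemma integrable_min_llr (P ν : Measure α) [IsProbabilityMeasure P] [IsFiniteMeasure ν]
    (hac : P ≪ ν) : Integrable (fun x => min (llr P ν x) 0) P := by
  rw [← integrable_rnDeriv_smul_iff hac]
  refine Integrable.of_bound (C := 1) ?_ (Eventually.of_forall fun x => ?_)
  · have := measurable_llr P ν
    exact Measurable.aestronglyMeasurable (by fun_prop)
  · have ht : 0 ≤ (P.rnDeriv ν x).toReal := ENNReal.toReal_nonneg
    simp only [llr, smul_eq_mul]
    generalize (P.rnDeriv ν x).toReal = t at ht
    have h := klFun_nonneg ht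
    rw [klFun_apply] at h
    rw [Real.norm_eq_abs, abs_of_nonpos (mul_nonpos_of_nonneg_of_nonpos ht (min_le_right _ _))]
    rcases le_total (Real.log t) 0 with h1 | h1
    · rw [min_eq_left h1]; linarith
    · rw [min_eq_right h1]; simp

end KLMin

/-- Existence and uniqueness of a minimiser of `KL(· ‖ Q)` over the set `Γ` of couplings with
prescribed marginals `μ i`, under the exponential-moment condition
`z_B = ∫ exp(−∑_{i∈S} B(x_i)) dQ ∈ (0, ∞)` and `∫ B dμ_i < ∞`: on `Γ ∩ {Π ≪ Q}` the quantity
`KL(Π ‖ Q)` is well-defined in `(−∞, +∞]` (its negative part is integrable) and bounded below,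
and if it is finite somewhere on `Γ` then it admits a unique minimiser over `Γ`. -/
theorem kl_min_exists_unique_of_exponential_moment
    {S : Type*} [Fintype S] [Nonempty S] (d : ℕ) (hd : 1 ≤ d)
    (Q : Measure (S → Fin d → ℝ)) [SigmaFinite Q]
    (B : (Fin d → ℝ) → ℝ) (hB_meas : Measurable B) (hB_nonneg : ∀ y, 0 ≤ B y)
    (hzB_pos : 0 < ∫⁻ x, ENNReal.ofReal (Real.exp (-∑ i, B (x i))) ∂Q)
    (hzB_fin : ∫⁻ x, ENNReal.ofReal (Real.exp (-∑ i, B (x i))) ∂Q < ∞)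
    (μ : S → Measure (Fin d → ℝ)) [∀ i, IsProbabilityMeasure (μ i)]
    (hB_int : ∀ i, Integrable B (μ i))
    (Γ : Set (Measure (S → Fin d → ℝ)))
    (hΓ : Γ = {P : Measure (S → Fin d → ℝ) | IsProbabilityMeasure P ∧
      ∀ i, P.map (fun x => x i) = μ i}) :
    (∀ P ∈ Γ, P ≪ Q → Integrable (fun x => min (llr P Q x) 0) P) ∧
    (∃ c : ℝ, ∀ P ∈ Γ, P ≪ Q → (c : EReal) ≤ KL P Q) ∧
    ((∃ P₀ ∈ Γ, KL P₀ Q ≠ ⊤) →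
      ∃ Pmin ∈ Γ, (∀ P ∈ Γ, KL Pmin Q ≤ KL P Q) ∧
        ∀ P' ∈ Γ, (∀ P ∈ Γ, KL P' Q ≤ KL P Q) → P' = Pmin) := by
  set V : (S → Fin d → ℝ) → ℝ := fun x => ∑ i, B (x i) with hVdef
  have hV : Measurable V := by fun_prop
  set ν := Q.withDensity fun x => ENNReal.ofReal (Real.exp (-V x)) with hν
  have hνfin : IsFiniteMeasure ν := isFiniteMeasure_withDensity hzB_fin.ne
  have hBi : ∀ P ∈ Γ, ∀ i, Integrable (fun x => B (x i)) P := by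
    intro P hP i
    rw [hΓ] at hP
    have h := hB_int i
    rw [← hP.2 i] at h
    exact (integrable_map_measure hB_meas.aestronglyMeasurable
      (measurable_pi_apply i).aemeasurable).1 h
  have hVP : ∀ P ∈ Γ, Integrable V P := fun P hP =>
    integrable_finsetSum _ fun i _ => hBi P hP i
  have hVint : ∀ P ∈ Γ, ∫ x, V x ∂P = ∑ i, ∫ y, B y ∂(μ i) := by
    intro P hP
    rw [integral_finsetSum _ fun i _ => hBi P hP i]
    refine Finset.sum_congr rfl fun i _ => ?_
    have h := hP
    rw [hΓ] at h
    rw [← h.2 i, integral_map (measurable_pi_apply i).aemeasurable hB_meas.aestronglyMeasurable]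
  have hprob : ∀ P ∈ Γ, IsProbabilityMeasure P := fun P hP => by
    rw [hΓ] at hP; exact hP.1
  set c : ℝ := 1 - ν.real Set.univ - ∑ i, ∫ y, B y ∂(μ i) with hc
  have hKL : ∀ P ∈ Γ, KL P Q = (InformationTheory.klDiv P ν : EReal) + (c : EReal) := by
    intro P hP
    have := hprob P hP
    rw [KLMin.KL_eq P Q V hV (hVP P hP) ν hν, hVint P hP]
  have hKLle : ∀ P ∈ Γ, ∀ P' ∈ Γ,
      KL P Q ≤ KL P' Q ↔ InformationTheory.klDiv P ν ≤ InformationTheory.klDiv P' ν := by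
    intro P hP P' hP'
    rw [hKL P hP, hKL P' hP', ← EReal.coe_ennreal_le_coe_ennreal_iff]
    refine ⟨fun h => ?_, fun h => by gcongr⟩
    have h2 := add_le_add_left h ((-c : ℝ) : EReal)
    simpa [add_assoc, ← EReal.coe_add, -EReal.coe_neg] using h2
  refine ⟨fun P hP hac => ?_, ⟨c, fun P hP _ => ?_⟩, ?_⟩
  · have := hprob P hP
    have hmin := KLMin.integrable_min_llr P ν ((KLMin.tilt_ac_iff P Q V hV).2 hac)
    refine (hmin.abs.add (hVP P hP)).mono' ?_ ?_
    · have := measurable_llr P Q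
      exact Measurable.aestronglyMeasurable (by fun_prop)
    · filter_upwards [KLMin.llr_tilt P Q V hV hac] with x hx
      have hVx : 0 ≤ V x := Finset.sum_nonneg fun i _ => hB_nonneg _
      have h1 : llr P ν x = llr P Q x + V x := hx
      simp only [Pi.add_apply, h1, Real.norm_eq_abs]
      rw [abs_of_nonpos (min_le_right _ _), abs_of_nonpos (min_le_right _ _)]
      rcases le_total (llr P Q x) 0 with h2 | h2
      · rw [min_eq_left h2]
        linarith [min_le_left (llr P Q x + V x) 0]
      · rw [min_eq_right h2]
        linarith [min_le_right (llr P Q x + V x) 0]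
  · rw [hKL P hP]
    exact le_add_of_nonneg_left (EReal.coe_ennreal_nonneg _)
  · rintro ⟨P₀, hP₀, hfin⟩
    have h0 : InformationTheory.klDiv P₀ ν ≠ ∞ := by
      intro h
      apply hfin
      rw [hKL P₀ hP₀, h, EReal.coe_ennreal_top, EReal.top_add_coe]
    have key := KLMin.exists_unique_klDiv ν Γ hprob ?_ ?_ ⟨P₀, hP₀, h0⟩
    · obtain ⟨Pm, hPm, hmin, huniq⟩ := key
      refine ⟨Pm, hPm, fun P hP => (hKLle _ hPm _ hP).2 (hmin P hP), fun P' hP' h => ?_⟩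
      exact huniq P' hP' fun P hP => (hKLle _ hP' _ hP).1 (h P hP)
    · intro P hP P' hP'
      rw [hΓ] at hP hP' ⊢
      have := hP.1
      have := hP'.1
      refine ⟨⟨?_⟩, fun i => ?_⟩
      · simp [ENNReal.inv_two_add_inv_two]
      · rw [Measure.map_add _ _ (measurable_pi_apply i), Measure.map_smul, Measure.map_smul,
          hP.2 i, hP'.2 i, ← add_smul, ENNReal.inv_two_add_inv_two, one_smul]
    · intro p P hp hlim
      rw [hΓ]
      refine ⟨⟨?_⟩, fun i => ?_⟩
      · have h1 := hlim Set.univ MeasurableSet.univ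
        refine tendsto_nhds_unique h1 ?_
        have : ∀ n, p n Set.univ = 1 := fun n => (hprob _ (hp n)).measure_univ
        simp [this]
      · ext A hA
        have hpre := measurable_pi_apply (X := fun _ : S => Fin d → ℝ) i hA
        rw [Measure.map_apply (measurable_pi_apply i) hA]
        refine tendsto_nhds_unique (hlim _ hpre) ?_
        have : ∀ n, p n ((fun x => x i) ⁻¹' A) = μ i A := fun n => by
          have h := hp n
          rw [hΓ] at h
          rw [← h.2 i, Measure.map_apply (measurable_pi_apply i) hA]
        exact (Filter.tendsto_congr this).2 tendsto_const_nhds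
end

section
/- Let T = (V, E) be a finite tree with edge lengths T^e > 0, let σ > 0 and d ≥ 1, and let Q be the σ-finite measure on (ℝ^d)^V with density q(x) = ∏_{{u,v}∈E} (2πσ²T^{{u,v}})^{−d/2} exp(−‖x_u − x_v‖² / (2σ²T^{{u,v}})) with respect to Lebesgue measure on (ℝ^d)^V. Let S ⊆ V be nonempty and for each i ∈ S let μ_i be a probability measure on ℝ^d which is absolutely continuous with respect to Lebesgue measure with density p_i satisfying ∫ ‖x‖² dμ_i(x) < ∞ and ∫ p_i |log p_i| dx < ∞. Then there exists a unique probability measure Π* on (ℝ^d)^V with marginal at each i ∈ S equal to μ_i which minimises KL(Π ‖ Q) := ∫ log(dΠ/dQ) dΠ (interpreted in (−∞,+∞] for Π ≪ Q, and set to +∞ otherwise) over all probability measures Π on (ℝ^d)^V with marginal at each i ∈ S equal to μ_i; moreover KL(Π* ‖ Q) is finite. -/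
open MeasureTheory ProbabilityTheory Classical

open scoped ENNReal

/-- The squared Euclidean distance `‖x u − x v‖²` between the coordinates of `x` at the two
endpoints of an unordered edge. -/
noncomputable def sqDist {V : Type*} {d : ℕ} (x : V → EuclideanSpace ℝ (Fin d)) :
    Sym2 V → ℝ :=
  Sym2.lift ⟨fun u v => ‖x u - x v‖ ^ 2, fun u v => by simp only []; rw [norm_sub_rev]⟩


section helpers
open InformationTheory Filter Topology

lemma tsb_aux_log {a m : ℝ} (ha : 0 ≤ a) (hm : 0 < m) :
    2 * a - 2 * √a * √m ≤ a * (Real.log a - Real.log m) := by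
  rcases ha.eq_or_lt with rfl | ha
  · simp
  have h := Real.log_le_sub_one_of_pos (x := √m / √a) (by positivity)
  rw [Real.log_div (by positivity) (by positivity), Real.log_sqrt hm.le, Real.log_sqrt ha.le] at h
  have h2 := mul_le_mul_of_nonneg_left h ha.le
  have h3 : a * (√m / √a - 1) = √a * √m - a := by
    have : a * (√m / √a) = √a * √m := by
      nth_rewrite 1 [← Real.mul_self_sqrt ha.le]
      field_simp
    rw [mul_sub, this, mul_one]
  rw [h3] at h2
  linarith

lemma tsb_aux_pointwise {a b t : ℝ} (ha : 0 ≤ a) (hb : 0 ≤ b) (ht : 0 < t) :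
    |a - b| + 2 * t * klFun ((a + b) / 2) ≤ t * (klFun a + klFun b) + (a + b) / t := by
  rcases (add_nonneg ha hb).eq_or_lt with h0 | hpos
  · have : a = 0 := by linarith
    have : b = 0 := by linarith
    subst a b
    simp; linarith
  set m := (a + b) / 2 with hm
  have hm0 : 0 < m := by positivity
  have h1 := tsb_aux_log ha hm0
  have h2 := tsb_aux_log hb hm0
  have hD : (√a - √b) ^ 2 / 2 ≤ klFun a + klFun b - 2 * klFun m := by
    have : klFun a + klFun b - 2 * klFun m
        = a * (Real.log a - Real.log m) + b * (Real.log b - Real.log m) := by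
      simp only [klFun_apply]
      have : b = 2 * m - a := by rw [hm]; ring
      rw [this]; ring
    rw [this]
    have e1 := Real.sq_sqrt ha
    have e2 := Real.sq_sqrt hb
    have e3 := Real.sq_sqrt hm0.le
    have e4 : √a ^ 2 + √b ^ 2 = 2 * √m ^ 2 := by rw [e1, e2, e3, hm]; ring
    nlinarith [sq_nonneg (√a + √b - 2 * √m)]
  have hab : |a - b| = |√a - √b| * (√a + √b) := by
    rw [← abs_of_nonneg (add_nonneg (Real.sqrt_nonneg a) (Real.sqrt_nonneg b)), ← abs_mul]
    congr 1
    nlinarith [Real.sq_sqrt ha, Real.sq_sqrt hb]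
  have hkey : |√a - √b| * (√a + √b) ≤ t * ((√a - √b) ^ 2 / 2) + (a + b) / t := by
    have e1 := Real.sq_sqrt ha
    have e2 := Real.sq_sqrt hb
    have e5 : (√a + √b) ^ 2 ≤ 2 * (a + b) := by nlinarith [sq_nonneg (√a - √b)]
    have : (a + b) / t ≥ (√a + √b) ^ 2 / (2 * t) := by
      rw [ge_iff_le, div_le_div_iff₀ (by positivity) ht]; nlinarith
    have h6 : |√a - √b| * (√a + √b) ≤ t * ((√a - √b) ^ 2 / 2) + (√a + √b) ^ 2 / (2 * t) := by
      rw [← sq_abs (√a - √b), ← sub_nonneg]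
      have : t * (|√a - √b| ^ 2 / 2) + (√a + √b) ^ 2 / (2 * t) - |√a - √b| * (√a + √b)
        = (t * |√a - √b| - (√a + √b)) ^ 2 / (2 * t) := by field_simp; ring
      rw [this]; positivity
    linarith
  rw [hab]
  nlinarith [mul_le_mul_of_nonneg_left hD ht.le]

/-- Integrated form. -/
lemma tsb_aux_integrated {α : Type*} [MeasurableSpace α] (ρ : Measure α)
    {f g : α → ℝ} (hf : Measurable f) (hg : Measurable g) (hf0 : ∀ x, 0 ≤ f x)
    (hg0 : ∀ x, 0 ≤ g x) (hf1 : ∫⁻ x, ENNReal.ofReal (f x) ∂ρ = 1)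
    (hg1 : ∫⁻ x, ENNReal.ofReal (g x) ∂ρ = 1) {t : ℝ} (ht : 0 < t) :
    eLpNorm (f - g) 1 ρ
      + ENNReal.ofReal (2 * t) * ∫⁻ x, ENNReal.ofReal (klFun ((f x + g x) / 2)) ∂ρ
    ≤ ENNReal.ofReal t * (∫⁻ x, ENNReal.ofReal (klFun (f x)) ∂ρ
        + ∫⁻ x, ENNReal.ofReal (klFun (g x)) ∂ρ) + ENNReal.ofReal (2 / t) := by
  have hk := measurable_klFun
  have e : ENNReal.ofReal (2 / t) = ENNReal.ofReal (1 / t) *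
      (∫⁻ x, ENNReal.ofReal (f x) ∂ρ + ∫⁻ x, ENNReal.ofReal (g x) ∂ρ) := by
    rw [hf1, hg1, one_add_one_eq_two, ← ENNReal.ofReal_ofNat 2, ← ENNReal.ofReal_mul (by positivity)]
    congr 1; ring
  rw [e, eLpNorm_one_eq_lintegral_enorm, ← lintegral_add_left (by fun_prop),
    ← lintegral_add_left (by fun_prop),
    ← lintegral_const_mul _ (by fun_prop), ← lintegral_const_mul _ (by fun_prop),
    ← lintegral_const_mul _ (by fun_prop), ← lintegral_add_left (by fun_prop),
    ← lintegral_add_left (by fun_prop)]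
  refine lintegral_mono fun x => ?_
  have hkm : 0 ≤ klFun ((f x + g x) / 2) := klFun_nonneg (by linarith [hf0 x, hg0 x])
  have hkf := klFun_nonneg (hf0 x)
  have hkg := klFun_nonneg (hg0 x)
  have := tsb_aux_pointwise (hf0 x) (hg0 x) ht
  have e1 : ‖(f - g) x‖ₑ = ENNReal.ofReal |f x - g x| := by
    rw [Real.enorm_eq_ofReal_abs]; rfl
  rw [e1, ← ENNReal.ofReal_mul (by positivity), ← ENNReal.ofReal_add (abs_nonneg _) (by positivity),
    ← ENNReal.ofReal_add hkf hkg, ← ENNReal.ofReal_add (hf0 x) (hg0 x),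
    ← ENNReal.ofReal_mul ht.le, ← ENNReal.ofReal_mul (by positivity),
    ← ENNReal.ofReal_add (by positivity) (mul_nonneg (by positivity) (add_nonneg (hf0 x) (hg0 x)))]
  apply ENNReal.ofReal_le_ofReal
  calc _ ≤ _ := this
    _ = _ := by ring

lemma tsb_aux_min {α : Type*} [MeasurableSpace α] (ρ : Measure α)
    (C : Set (α → ℝ)) (hmeas : ∀ f ∈ C, Measurable f) (hnn : ∀ f ∈ C, ∀ x, 0 ≤ f x)
    (hone : ∀ f ∈ C, ∫⁻ x, ENNReal.ofReal (f x) ∂ρ = 1)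
    (hmid : ∀ f ∈ C, ∀ g ∈ C, (fun x => (f x + g x) / 2) ∈ C)
    (hclosed : ∀ F : ℕ → α → ℝ, (∀ n, F n ∈ C) → ∀ f : α → ℝ, Measurable f → (∀ x, 0 ≤ f x) →
      Tendsto (fun n => eLpNorm (F n - f) 1 ρ) atTop (𝓝 0) → f ∈ C)
    (hfin : ∃ f ∈ C, ∫⁻ x, ENNReal.ofReal (klFun (f x)) ∂ρ ≠ ∞) :
    ∃ f ∈ C, (∀ g ∈ C, ∫⁻ x, ENNReal.ofReal (klFun (f x)) ∂ρ
        ≤ ∫⁻ x, ENNReal.ofReal (klFun (g x)) ∂ρ) ∧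
      ∀ g ∈ C, (∀ h ∈ C, ∫⁻ x, ENNReal.ofReal (klFun (g x)) ∂ρ
        ≤ ∫⁻ x, ENNReal.ofReal (klFun (h x)) ∂ρ) → g =ᵐ[ρ] f := by
  set J : (α → ℝ) → ℝ≥0∞ := fun f => ∫⁻ x, ENNReal.ofReal (klFun (f x)) ∂ρ with hJ
  change ∃ f ∈ C, J f ≠ ∞ at hfin
  change ∃ f ∈ C, (∀ g ∈ C, J f ≤ J g) ∧ ∀ g ∈ C, (∀ h ∈ C, J g ≤ J h) → g =ᵐ[ρ] f
  set m : ℝ≥0∞ := ⨅ f ∈ C, J f with hm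
  have hmle : ∀ f ∈ C, m ≤ J f := fun f hf => iInf₂_le f hf
  have hmtop : m ≠ ∞ := by
    obtain ⟨f, hf, hf'⟩ := hfin
    exact ne_top_of_le_ne_top hf' (hmle f hf)
  -- main estimate
  have hest : ∀ f ∈ C, ∀ g ∈ C, ∀ ε : ℝ, 0 ≤ ε → J f ≤ m + ENNReal.ofReal ε →
      J g ≤ m + ENNReal.ofReal ε → ∀ t : ℝ, 0 < t →
      eLpNorm (f - g) 1 ρ ≤ ENNReal.ofReal (2 * t * ε + 2 / t) := by
    intro f hf g hg ε hε h1 h2 t ht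
    have h3 := tsb_aux_integrated ρ (hmeas f hf) (hmeas g hg) (hnn f hf) (hnn g hg)
      (hone f hf) (hone g hg) ht
    have h4 : eLpNorm (f - g) 1 ρ + ENNReal.ofReal (2 * t) * m
        ≤ ENNReal.ofReal (2 * t * ε + 2 / t) + ENNReal.ofReal (2 * t) * m := by
      calc _ ≤ _ := by gcongr; exact hmle _ (hmid f hf g hg)
        _ ≤ _ := h3
        _ ≤ ENNReal.ofReal t * ((m + ENNReal.ofReal ε) + (m + ENNReal.ofReal ε))
            + ENNReal.ofReal (2 / t) := by gcongr
        _ = _ := by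
          rw [ENNReal.ofReal_add (by positivity) (by positivity), ENNReal.ofReal_mul (by positivity),
            ENNReal.ofReal_mul (by positivity), ENNReal.ofReal_ofNat]
          ring
    exact (ENNReal.add_le_add_iff_right (ENNReal.mul_ne_top ENNReal.ofReal_ne_top hmtop)).1 h4
  have hex : ∀ n : ℕ, ∃ f ∈ C, J f ≤ m + ENNReal.ofReal ((1/64) * (1/4) ^ n) := by
    intro n
    have : m < m + ENNReal.ofReal ((1/64) * (1/4) ^ n) :=
      ENNReal.lt_add_right hmtop (by simp)
    obtain ⟨f, hf, h⟩ := by simpa only [hm, iInf_lt_iff] using this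
    exact ⟨f, hf, h.le⟩
  choose F hFC hFJ using hex
  have hcau : ∀ N n k : ℕ, N ≤ n → N ≤ k →
      eLpNorm (F n - F k) 1 ρ < ENNReal.ofReal ((1/2) ^ N) := by
    intro N n k hn hk
    have hmono : ∀ n, N ≤ n → J (F n) ≤ m + ENNReal.ofReal ((1/64) * (1/4) ^ N) := by
      intro n hn
      refine (hFJ n).trans ?_
      have : ((1/4 : ℝ)) ^ n ≤ (1/4) ^ N := by
        exact pow_le_pow_of_le_one (by norm_num) (by norm_num) hn
      gcongr
    refine (hest _ (hFC n) _ (hFC k) _ (by positivity) (hmono n hn) (hmono k hk)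
      (8 * 2 ^ N) (by positivity)).trans_lt ?_
    rw [ENNReal.ofReal_lt_ofReal_iff (by positivity)]
    have h4 : (1/4 : ℝ) ^ N = (1/2) ^ N * (1/2) ^ N := by rw [← mul_pow]; norm_num
    have h5 : (2 : ℝ) ^ N = ((1/2) ^ N)⁻¹ := by rw [← inv_pow]; norm_num
    rw [h4, h5]
    have hp : (0 : ℝ) < (1/2) ^ N := by positivity
    generalize ((1:ℝ)/2) ^ N = y at hp
    field_simp
    norm_num
  have hB : ∑' i : ℕ, ENNReal.ofReal ((1/2) ^ i) ≠ ∞ := by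
    rw [← ENNReal.ofReal_tsum_of_nonneg (fun n => by positivity) summable_geometric_two]
    exact ENNReal.ofReal_ne_top
  have hFm : ∀ n, AEStronglyMeasurable (F n) ρ := fun n => (hmeas _ (hFC n)).aestronglyMeasurable
  obtain ⟨f₁, hf₁m, hf₁⟩ := exists_stronglyMeasurable_limit_of_tendsto_ae hFm
    (Lp.ae_tendsto_of_cauchy_eLpNorm hFm le_rfl hB hcau)
  set f : α → ℝ := fun x => max (f₁ x) 0 with hfdef
  have hfm : Measurable f := hf₁m.measurable.max measurable_const
  have hflim : ∀ᵐ x ∂ρ, Tendsto (fun n => F n x) atTop (𝓝 (f x)) := by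
    filter_upwards [hf₁] with x hx
    have : 0 ≤ f₁ x := ge_of_tendsto' hx fun n => hnn _ (hFC n) x
    simpa [hfdef, max_eq_left this] using hx
  have hfC : f ∈ C := hclosed F hFC f hfm (fun x => le_max_right _ _)
    (Lp.cauchy_tendsto_of_tendsto hFm f hB hcau hflim)
  have hJf : J f ≤ m := by
    have hk := measurable_klFun
    have h1 : J f ≤ liminf (fun n => J (F n)) atTop := by
      calc J f = ∫⁻ x, liminf (fun n => ENNReal.ofReal (klFun (F n x))) atTop ∂ρ := by
            refine lintegral_congr_ae ?_
            filter_upwards [hflim] with x hx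
            exact (((ENNReal.continuous_ofReal.comp continuous_klFun).tendsto _).comp
              hx).liminf_eq.symm
        _ ≤ _ := lintegral_liminf_le fun n => by
            have := hmeas _ (hFC n); fun_prop
    have h2 : Tendsto (fun n : ℕ => m + ENNReal.ofReal ((1/64) * (1/4) ^ n)) atTop (𝓝 m) := by
      have : Tendsto (fun n : ℕ => (1/64 : ℝ) * (1/4) ^ n) atTop (𝓝 (1/64 * 0)) :=
        (tendsto_pow_atTop_nhds_zero_of_lt_one (by norm_num) (by norm_num)).const_mul _
      have := (ENNReal.tendsto_ofReal this).const_add m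
      simpa using this
    exact h1.trans ((liminf_le_liminf (Eventually.of_forall hFJ)).trans h2.liminf_eq.le)
  refine ⟨f, hfC, fun g hg => hJf.trans (hmle g hg), fun g hg hgmin => ?_⟩
  have hz : eLpNorm (g - f) 1 ρ = 0 := by
    have hlim : Tendsto (fun n : ℕ => ENNReal.ofReal (2 / ((n : ℝ) + 1))) atTop (𝓝 0) := by
      have := (tendsto_one_div_add_atTop_nhds_zero_nat (𝕜 := ℝ)).const_mul 2
      have := ENNReal.tendsto_ofReal this
      simpa [div_eq_mul_inv] using this
    refine le_antisymm (ge_of_tendsto' hlim fun n => ?_) bot_le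
    have := hest g hg f hfC 0 le_rfl (by simpa using (hgmin f hfC).trans hJf) (by simpa using hJf)
      ((n : ℝ) + 1) (by positivity)
    simpa using this
  rw [eLpNorm_eq_zero_iff ((hmeas g hg).sub hfm).aestronglyMeasurable one_ne_zero] at hz
  filter_upwards [hz] with x hx
  simpa [sub_eq_zero] using hx

end helpers

section helpers2
open InformationTheory Filter Topology

lemma tsb_klDiv_withDensity {α : Type*} [MeasurableSpace α] (ρ : Measure α) [IsFiniteMeasure ρ]
    {f : α → ℝ} (hf : Measurable f) (hf0 : ∀ x, 0 ≤ f x)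
    [IsFiniteMeasure (ρ.withDensity fun x => ENNReal.ofReal (f x))] :
    klDiv (ρ.withDensity fun x => ENNReal.ofReal (f x)) ρ
      = ∫⁻ x, ENNReal.ofReal (klFun (f x)) ∂ρ := by
  rw [klDiv_eq_lintegral_klFun_of_ac (withDensity_absolutelyContinuous _ _)]
  refine lintegral_congr_ae ?_
  filter_upwards [Measure.rnDeriv_withDensity ρ (f := fun x => ENNReal.ofReal (f x))
    (by fun_prop)] with x hx
  rw [hx, ENNReal.toReal_ofReal (hf0 x)]

lemma tsb_min_measure {α β ι : Type*} [MeasurableSpace α] [MeasurableSpace β]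
    (ρ : Measure α) [IsFiniteMeasure ρ] (S : Finset ι) (hS : S.Nonempty)
    (e : ι → α → β) (he : ∀ i, Measurable (e i)) (μ : ι → Measure β)
    (hμ : ∀ i ∈ S, IsProbabilityMeasure (μ i))
    (hex : ∃ P : Measure α, IsProbabilityMeasure P ∧ (∀ i ∈ S, P.map (e i) = μ i) ∧
      klDiv P ρ ≠ ∞) :
    ∃ Pstar : Measure α, IsProbabilityMeasure Pstar ∧ (∀ i ∈ S, Pstar.map (e i) = μ i) ∧
      klDiv Pstar ρ ≠ ∞ ∧
      (∀ P : Measure α, IsProbabilityMeasure P → (∀ i ∈ S, P.map (e i) = μ i) →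
        klDiv Pstar ρ ≤ klDiv P ρ) ∧
      (∀ P : Measure α, IsProbabilityMeasure P → (∀ i ∈ S, P.map (e i) = μ i) →
        (∀ P' : Measure α, IsProbabilityMeasure P' → (∀ i ∈ S, P'.map (e i) = μ i) →
          klDiv P ρ ≤ klDiv P' ρ) → P = Pstar) := by
  obtain ⟨i0, hi0⟩ := hS
  set D : (α → ℝ) → Measure α := fun f => ρ.withDensity fun x => ENNReal.ofReal (f x) with hD
  set C : Set (α → ℝ) := {f | Measurable f ∧ (∀ x, 0 ≤ f x) ∧ ∀ i ∈ S, (D f).map (e i) = μ i}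
    with hC
  have hprob : ∀ f ∈ C, IsProbabilityMeasure (D f) := by
    rintro f ⟨-, -, hf⟩
    have := hμ i0 hi0
    rw [← hf i0 hi0] at this
    exact Measure.isProbabilityMeasure_of_map (e i0)
  have hset : ∀ f ∈ C, ∀ i ∈ S, ∀ B, MeasurableSet B →
      ∫⁻ x in e i ⁻¹' B, ENNReal.ofReal (f x) ∂ρ = μ i B := by
    rintro f ⟨-, -, hf⟩ i hi B hB
    rw [← hf i hi, Measure.map_apply (he i) hB, hD, withDensity_apply _ (he i hB)]
  have hsetc : ∀ f, Measurable f → (∀ x, 0 ≤ f x) → (∀ i ∈ S, ∀ B, MeasurableSet B →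
      ∫⁻ x in e i ⁻¹' B, ENNReal.ofReal (f x) ∂ρ = μ i B) → f ∈ C := by
    intro f hf hf0 h
    refine ⟨hf, hf0, fun i hi => Measure.ext fun B hB => ?_⟩
    rw [← h i hi B hB, Measure.map_apply (he i) hB, hD, withDensity_apply _ (he i hB)]
  have hkl : ∀ f ∈ C, klDiv (D f) ρ = ∫⁻ x, ENNReal.ofReal (klFun (f x)) ∂ρ := by
    intro f hf
    have := hprob f hf
    exact tsb_klDiv_withDensity ρ hf.1 hf.2.1
  have hden : ∀ P : Measure α, IsProbabilityMeasure P → (∀ i ∈ S, P.map (e i) = μ i) →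
      P ≪ ρ → (fun x => (P.rnDeriv ρ x).toReal) ∈ C ∧ D (fun x => (P.rnDeriv ρ x).toReal) = P := by
    intro P _ hP hac
    have h1 : D (fun x => (P.rnDeriv ρ x).toReal) = P := by
      rw [hD]
      conv_rhs => rw [← Measure.withDensity_rnDeriv_eq P ρ hac]
      refine withDensity_congr_ae ?_
      filter_upwards [Measure.rnDeriv_lt_top P ρ] with x hx
      rw [ENNReal.ofReal_toReal hx.ne]
    refine ⟨⟨by fun_prop, fun x => ENNReal.toReal_nonneg, ?_⟩, h1⟩
    rw [h1]; exact hP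
  obtain ⟨f, hfC, hfmin, hfuniq⟩ := tsb_aux_min ρ C (fun f hf => hf.1) (fun f hf => hf.2.1)
    (by
      intro f hf
      have := hset f hf i0 hi0 Set.univ MeasurableSet.univ
      have h2 := hμ i0 hi0
      simpa using this)
    (by
      intro f hf g hg
      have hfm := hf.1
      have hgm := hg.1
      refine hsetc _ (by fun_prop) (fun x => by have := hf.2.1 x; have := hg.2.1 x; positivity) ?_
      intro i hi B hB
      have : ∀ x, ENNReal.ofReal ((f x + g x) / 2)
          = 2⁻¹ * (ENNReal.ofReal (f x) + ENNReal.ofReal (g x)) := by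
        intro x
        rw [← ENNReal.ofReal_add (hf.2.1 x) (hg.2.1 x), div_eq_inv_mul,
          ENNReal.ofReal_mul (by norm_num), ENNReal.ofReal_inv_of_pos (by norm_num),
          ENNReal.ofReal_ofNat]
      simp_rw [this]
      rw [lintegral_const_mul _ (by fun_prop), lintegral_add_left (by fun_prop),
        hset f hf i hi B hB, hset g hg i hi B hB, ← two_mul, ← mul_assoc,
        ENNReal.inv_mul_cancel (by norm_num) (by norm_num), one_mul])
    (by
      intro F hF f hfm hf0 hlim
      refine hsetc f hfm hf0 fun i hi B hB => ?_
      have hle : ∀ g h : α → ℝ, Measurable g → Measurable h → 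
          ∫⁻ x in e i ⁻¹' B, ENNReal.ofReal (g x) ∂ρ ≤
          ∫⁻ x in e i ⁻¹' B, ENNReal.ofReal (h x) ∂ρ + eLpNorm (g - h) 1 ρ := by
        intro g h hg hh
        rw [eLpNorm_one_eq_lintegral_enorm]
        calc _ ≤ ∫⁻ x in e i ⁻¹' B, (ENNReal.ofReal (h x) + ‖(g - h) x‖ₑ) ∂ρ := by
              refine lintegral_mono fun x => ?_
              rw [Real.enorm_eq_ofReal_abs]
              refine le_trans ?_ (ENNReal.ofReal_add_le)
              apply ENNReal.ofReal_le_ofReal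
              have := le_abs_self (g x - h x)
              simp only [Pi.sub_apply]; linarith
          _ = _ := lintegral_add_left (by fun_prop) _
          _ ≤ _ := by gcongr; exact Measure.restrict_le_self
      have hm : ∀ n, Measurable (F n) := fun n => (hF n).1
      have hl2 : Tendsto (fun n => μ i B + eLpNorm (F n - f) 1 ρ) atTop (𝓝 (μ i B)) := by
        simpa using hlim.const_add (μ i B)
      have hl3 : Tendsto (fun n => ∫⁻ x in e i ⁻¹' B, ENNReal.ofReal (f x) ∂ρ
          + eLpNorm (F n - f) 1 ρ) atTop (𝓝 (∫⁻ x in e i ⁻¹' B, ENNReal.ofReal (f x) ∂ρ)) := by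
        simpa using hlim.const_add (∫⁻ x in e i ⁻¹' B, ENNReal.ofReal (f x) ∂ρ)
      apply le_antisymm
      · refine ge_of_tendsto' hl2 fun n => ?_
        have := hle f (F n) hfm (hm n)
        rwa [hset _ (hF n) i hi B hB, eLpNorm_sub_comm] at this
      · refine ge_of_tendsto' hl3 fun n => ?_
        have := hle (F n) f (hm n) hfm
        rwa [hset _ (hF n) i hi B hB] at this)
    (by
      obtain ⟨P, hP1, hP2, hP3⟩ := hex
      obtain ⟨h1, h2⟩ := hden P hP1 hP2 (klDiv_ne_top_iff.1 hP3).1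
      refine ⟨_, h1, ?_⟩
      rw [← hkl _ h1, h2]
      exact hP3)
  have hmin : ∀ P : Measure α, IsProbabilityMeasure P → (∀ i ∈ S, P.map (e i) = μ i) →
        klDiv (D f) ρ ≤ klDiv P ρ := by
    intro P hP1 hP2
    by_cases hP3 : klDiv P ρ = ∞
    · rw [hP3]; exact le_top
    obtain ⟨h1, h2⟩ := hden P hP1 hP2 (klDiv_ne_top_iff.1 hP3).1
    have := hfmin _ h1
    rwa [← hkl _ h1, h2, ← hkl _ hfC] at this
  have hfin : klDiv (D f) ρ ≠ ∞ := by
    obtain ⟨P, hP1, hP2, hP3⟩ := hex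
    exact ne_top_of_le_ne_top hP3 (hmin P hP1 hP2)
  refine ⟨D f, hprob f hfC, hfC.2.2, hfin, hmin, ?_⟩
  intro P hP1 hP2 hPmin
  have hP3 : klDiv P ρ ≠ ∞ := ne_top_of_le_ne_top hfin (hPmin _ (hprob f hfC) hfC.2.2)
  obtain ⟨h1, h2⟩ := hden P hP1 hP2 (klDiv_ne_top_iff.1 hP3).1
  have := hfuniq _ h1 (fun h hh => by
    rw [← hkl _ h1, h2, ← hkl _ hh]
    exact hPmin _ (hprob h hh) hh.2.2)
  rw [← h2]
  refine withDensity_congr_ae ?_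
  filter_upwards [this] with x hx
  rw [hx]

lemma tsb_KL_eq {α : Type*} [MeasurableSpace α] (P Q : Measure α) [IsProbabilityMeasure P]
    [SigmaFinite Q] [NeZero Q] {φ : α → ℝ} (hφQ : Integrable (fun x => Real.exp (φ x)) Q)
    (hφP : Integrable φ P) :
    KL P Q = (klDiv P (Q.tilted φ) : EReal)
      + ((∫ x, φ x ∂P - Real.log (∫ x, Real.exp (φ x) ∂Q) : ℝ) : EReal) := by
  have hprob := isProbabilityMeasure_tilted hφQ
  have hac : P ≪ Q ↔ P ≪ Q.tilted φ :=
    ⟨fun h => h.trans (absolutelyContinuous_tilted hφQ),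
      fun h => h.trans (tilted_absolutelyContinuous _ _)⟩
  have hiff : (P ≪ Q ∧ Integrable (llr P Q) P) ↔ klDiv P (Q.tilted φ) ≠ ∞ := by
    rw [klDiv_ne_top_iff, ← hac]
    refine and_congr_right fun h => ?_
    refine ⟨fun h2 => integrable_llr_tilted_right h hφP h2 hφQ, fun h2 => ?_⟩
    rw [integrable_congr (llr_tilted_right h hφQ)] at h2
    have h3 : Integrable (fun x => -φ x + Real.log (∫ z, Real.exp (φ z) ∂Q)) P :=
      hφP.neg.add (integrable_const _)
    refine (h2.sub h3).congr (ae_of_all _ fun x => ?_)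
    simp only [Pi.sub_apply]
    ring
  unfold KL
  by_cases h : klDiv P (Q.tilted φ) = ∞
  · rw [if_neg (by rw [hiff]; simpa using h), h, EReal.coe_ennreal_top, EReal.top_add_coe]
  · have h' := hiff.2 h
    have h'' := klDiv_ne_top_iff.1 h
    rw [if_pos h', ← EReal.coe_ennreal_toReal h, toReal_klDiv h''.1 h''.2,
      integral_llr_tilted_right h'.1 hφP hφQ h'.2, ← EReal.coe_add]
    congr 1
    simp
    
end helpers2

section helpers3
open InformationTheory Filter Topology

lemma tsb_pi_withDensity {ι E : Type*} [Fintype ι] [MeasureSpace E]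
    [SigmaFinite (volume : Measure E)] (g : ι → E → ℝ) (hg : ∀ i, Measurable (g i))
    (hg0 : ∀ i y, 0 ≤ g i y)
    [∀ i, IsProbabilityMeasure ((volume : Measure E).withDensity fun y => ENNReal.ofReal (g i y))] :
    Measure.pi (fun i => (volume : Measure E).withDensity fun y => ENNReal.ofReal (g i y))
      = (volume : Measure (ι → E)).withDensity fun x => ENNReal.ofReal (∏ i, g i (x i)) := by
  have hint : ∀ i, Integrable (g i) (volume : Measure E) := by
    intro i
    refine (lintegral_ofReal_ne_top_iff_integrable (hg i).aestronglyMeasurable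
      (ae_of_all _ (hg0 i))).1 ?_
    have := measure_univ (μ := (volume : Measure E).withDensity fun y => ENNReal.ofReal (g i y))
    rw [withDensity_apply _ MeasurableSet.univ, Measure.restrict_univ] at this
    rw [this]; exact ENNReal.one_ne_top
  refine Measure.pi_eq fun s hs => ?_
  rw [withDensity_apply _ (MeasurableSet.univ_pi hs),
    ← lintegral_indicator (MeasurableSet.univ_pi hs)]
  have h1 : ∀ i, Integrable ((s i).indicator (g i)) (volume : Measure E) :=
    fun i => (hint i).indicator (hs i)
  have h2 : ∀ i y, 0 ≤ (s i).indicator (g i) y := fun i y =>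
    Set.indicator_nonneg (fun y _ => hg0 i y) y
  have h3 : ∀ x : ι → E, (Set.univ.pi s).indicator
      (fun x => ENNReal.ofReal (∏ i, g i (x i))) x
      = ENNReal.ofReal (∏ i, (s i).indicator (g i) (x i)) := by
    intro x
    by_cases hx : x ∈ Set.univ.pi s
    · rw [Set.indicator_of_mem hx]
      congr 1
      refine Finset.prod_congr rfl fun i _ => ?_
      rw [Set.indicator_of_mem (hx i (Set.mem_univ i))]
    · rw [Set.indicator_of_notMem hx]
      simp only [Set.mem_univ_pi, not_forall] at hx
      obtain ⟨i, hi⟩ := hx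
      rw [Finset.prod_eq_zero (Finset.mem_univ i) (Set.indicator_of_notMem hi _)]
      simp
  simp_rw [h3]
  rw [← ofReal_integral_eq_lintegral_ofReal
    (show Integrable (fun x : ι → E => ∏ i, (s i).indicator (g i) (x i)) volume from
      Integrable.fintype_prod h1)
    (ae_of_all _ fun x => Finset.prod_nonneg fun i _ => h2 i _),
    integral_fintype_prod_volume_eq_prod, ENNReal.ofReal_prod_of_nonneg
      (fun i _ => integral_nonneg (h2 i))]
  refine Finset.prod_congr rfl fun i _ => ?_
  rw [ofReal_integral_eq_lintegral_ofReal (h1 i) (ae_of_all _ (h2 i)),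
    withDensity_apply _ (hs i), ← lintegral_indicator (hs i)]
  refine lintegral_congr fun y => ?_
  by_cases hy : y ∈ s i <;> simp [hy]

lemma tsb_sqDist_mk {V : Type*} {d : ℕ} (x : V → EuclideanSpace ℝ (Fin d)) (u v : V) :
    sqDist x s(u, v) = ‖x u - x v‖ ^ 2 := rfl

lemma tsb_sqDist_nonneg {V : Type*} {d : ℕ} (x : V → EuclideanSpace ℝ (Fin d)) (e : Sym2 V) :
    0 ≤ sqDist x e := by
  induction e with | _ u v => rw [tsb_sqDist_mk]; positivity

lemma tsb_sqDist_continuous {V : Type*} {d : ℕ} (e : Sym2 V) :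
    Continuous fun x : V → EuclideanSpace ℝ (Fin d) => sqDist x e := by
  induction e with | _ u v => simp only [tsb_sqDist_mk]; fun_prop

lemma tsb_sq_le {E : Type*} [NormedAddCommGroup E] (a b : E) :
    ‖b‖ ^ 2 ≤ 2 * ‖a‖ ^ 2 + 2 * ‖a - b‖ ^ 2 := by
  have h : ‖b‖ ≤ ‖a‖ + ‖a - b‖ := by
    have := norm_sub_le a (a - b)
    simpa using this
  nlinarith [sq_nonneg (‖a‖ - ‖a - b‖), norm_nonneg b]

lemma tsb_coercive {V : Type*} [Fintype V] {d : ℕ} (G : SimpleGraph V) [Fintype G.edgeSet]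
    (hG : G.Connected) (c : Sym2 V → ℝ) (hc : ∀ e ∈ G.edgeFinset, 0 < c e) (i0 : V) :
    ∃ k : ℝ, 0 < k ∧ ∀ x : V → EuclideanSpace ℝ (Fin d),
      k * ∑ i, ‖x i‖ ^ 2 ≤ ‖x i0‖ ^ 2 + ∑ e ∈ G.edgeFinset, sqDist x e / c e := by
  set B : (V → EuclideanSpace ℝ (Fin d)) → ℝ :=
    fun x => ‖x i0‖ ^ 2 + ∑ e ∈ G.edgeFinset, sqDist x e / c e with hB
  have hs0 : ∀ x, ∀ e ∈ G.edgeFinset, 0 ≤ sqDist (d := d) x e / c e := fun x e he =>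
    div_nonneg (tsb_sqDist_nonneg x e) (hc e he).le
  have hB0 : ∀ x, 0 ≤ B x := fun x =>
    add_nonneg (by positivity) (Finset.sum_nonneg (hs0 x))
  have hBe : ∀ x, ∀ e ∈ G.edgeFinset, sqDist x e ≤ c e * B x := by
    intro x e he
    have h1 := Finset.single_le_sum (hs0 x) he
    have h2 : sqDist x e / c e ≤ B x := h1.trans (le_add_of_nonneg_left (by positivity))
    rwa [div_le_iff₀' (hc e he)] at h2
  have hind : ∀ i, ∃ C : ℝ, 0 ≤ C ∧ ∀ x : V → EuclideanSpace ℝ (Fin d), ‖x i‖ ^ 2 ≤ C * B x := by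
    intro i
    have hr := (SimpleGraph.reachable_iff_reflTransGen i0 i).1 (hG.preconnected i0 i)
    induction hr with
    | refl =>
      refine ⟨1, zero_le_one, fun x => ?_⟩
      rw [one_mul]
      exact le_add_of_nonneg_right (Finset.sum_nonneg (hs0 x))
    | @tail u v _ huv ih =>
      obtain ⟨C, hC, h⟩ := ih
      have he : s(u, v) ∈ G.edgeFinset := by simpa using huv
      refine ⟨2 * C + 2 * c s(u, v), by have := hc _ he; positivity, fun x => ?_⟩
      have h1 := tsb_sq_le (x u) (x v)
      have h2 := hBe x _ he
      rw [tsb_sqDist_mk] at h2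
      have h3 := h x
      nlinarith
  choose C hC0 hC using hind
  have hpos : 0 < ∑ i, C i + 1 := add_pos_of_nonneg_of_pos (Finset.sum_nonneg fun i _ => hC0 i) one_pos
  refine ⟨(∑ i, C i + 1)⁻¹, inv_pos.2 hpos, fun x => ?_⟩
  rw [inv_mul_le_iff₀ hpos]
  calc ∑ i, ‖x i‖ ^ 2 ≤ ∑ i, C i * B x := Finset.sum_le_sum fun i _ => hC i x
    _ = (∑ i, C i) * B x := by rw [Finset.sum_mul]
    _ ≤ _ := by have := hB0 x; nlinarith

lemma tsb_gauss_integrable {V : Type*} [Fintype V] {d : ℕ} {k : ℝ} (hk : 0 < k) :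
    Integrable (fun x : V → EuclideanSpace ℝ (Fin d) => Real.exp (-(k * ∑ i, ‖x i‖ ^ 2))) := by
  have h1 : Integrable (fun y : EuclideanSpace ℝ (Fin d) => Real.exp (-(k * ‖y‖ ^ 2))) := by
    have := (GaussianFourier.integrable_cexp_neg_mul_sq_norm_add (b := (k : ℂ))
      (by simpa using hk) 0 (0 : EuclideanSpace ℝ (Fin d))).norm
    refine this.congr (ae_of_all _ fun y => ?_)
    simp [Complex.norm_exp, ← Complex.ofReal_pow]
  have h2 := Integrable.fintype_prod (ι := V)
    (f := fun _ (y : EuclideanSpace ℝ (Fin d)) => Real.exp (-(k * ‖y‖ ^ 2)))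
    (μ := fun _ => volume) (fun _ => h1)
  refine h2.congr (ae_of_all _ fun x => ?_)
  simp only
  rw [← Real.exp_sum, Finset.mul_sum, Finset.sum_neg_distrib]

end helpers3

section helpers4
open InformationTheory Filter Topology

lemma tsb_finite {α : Type*} [MeasurableSpace α] (ν : Measure α) [SigmaFinite ν] (F q : α → ℝ)
    (hF : Measurable F) (hq : Measurable q) (hF0 : ∀ x, 0 ≤ F x) (hq0 : ∀ x, 0 < q x)
    (P : Measure α) [IsProbabilityMeasure P]
    (hP : P = ν.withDensity fun x => ENNReal.ofReal (F x))
    (hint : Integrable (fun x => Real.log (F x) - Real.log (q x)) P) :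
    KL P (ν.withDensity fun x => ENNReal.ofReal (q x)) ≠ ⊤ := by
  have hqm : Measurable fun x => ENNReal.ofReal (q x) := by fun_prop
  have hFm : Measurable fun x => ENNReal.ofReal (F x) := by fun_prop
  have hPν : P ≪ ν := by rw [hP]; exact withDensity_absolutelyContinuous _ _
  have hac : P ≪ ν.withDensity fun x => ENNReal.ofReal (q x) := by
    refine hPν.trans (withDensity_absolutelyContinuous' hqm.aemeasurable (ae_of_all _ fun x => ?_))
    simpa using hq0 x
  have h1 := Measure.rnDeriv_withDensity_right P ν hqm.aemeasurable
    (ae_of_all _ fun x => by simpa using hq0 x) (ae_of_all _ fun x => ENNReal.ofReal_ne_top)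
  have h2 : P.rnDeriv ν =ᵐ[ν] fun x => ENNReal.ofReal (F x) := by
    rw [hP]; exact Measure.rnDeriv_withDensity ν hFm
  have hFne : ∀ᵐ x ∂P, F x ≠ 0 := by
    rw [hP, ae_withDensity_iff hFm]
    refine ae_of_all _ fun x hx h0 => hx (by simp [h0])
  have hllr : llr P (ν.withDensity fun x => ENNReal.ofReal (q x))
      =ᵐ[P] fun x => Real.log (F x) - Real.log (q x) := by
    filter_upwards [hPν.ae_le h1, hPν.ae_le h2, hFne] with x e1 e2 e3
    rw [llr, e1, e2, ENNReal.toReal_mul, ENNReal.toReal_inv, ENNReal.toReal_ofReal (hF0 x),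
      ENNReal.toReal_ofReal (hq0 x).le, Real.log_mul (inv_ne_zero (hq0 x).ne') e3, Real.log_inv]
    ring
  unfold KL
  rw [if_pos ⟨hac, hint.congr hllr.symm⟩]
  exact EReal.coe_ne_top _

end helpers4

set_option maxHeartbeats 1000000 in
/-- **Existence and uniqueness of the static tree-structured Schrödinger bridge.** Let `Q` be
the Brownian reference measure on `(ℝ^d)^V` attached to a finite tree `G` with edge lengths
`T`, let `S` be a nonempty set of vertices and `μ i` (for `i ∈ S`) probability measures with
Lebesgue densities having finite second moments and finite entropy.  Then there exists a unique
probability measure `P*` on `(ℝ^d)^V` with marginal `μ i` at each `i ∈ S` minimising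
`KL(· ‖ Q)` over all probability measures with these marginals, and its KL divergence is
finite. -/
theorem static_treeSB_exists_unique
    {V : Type*} [Fintype V] [DecidableEq V]
    (G : SimpleGraph V) [DecidableRel G.Adj] (hG : G.IsTree)
    (T : Sym2 V → ℝ) (hT_pos : ∀ e ∈ G.edgeFinset, 0 < T e)
    (σ : ℝ) (hσ : 0 < σ) (d : ℕ) (hd : 1 ≤ d)
    (Q : Measure (V → EuclideanSpace ℝ (Fin d)))
    (hQ : Q = volume.withDensity (fun x => ENNReal.ofReal (∏ e ∈ G.edgeFinset,
      (2 * Real.pi * σ ^ 2 * T e) ^ (-(d : ℝ) / 2) *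
        Real.exp (-(sqDist x e) / (2 * σ ^ 2 * T e)))))
    (S : Finset V) (hS : S.Nonempty)
    (μ : V → Measure (EuclideanSpace ℝ (Fin d)))
    (hμ_prob : ∀ i ∈ S, IsProbabilityMeasure (μ i))
    (p : V → EuclideanSpace ℝ (Fin d) → ℝ)
    (hp_meas : ∀ i ∈ S, Measurable (p i))
    (hp_nonneg : ∀ i ∈ S, ∀ y, 0 ≤ p i y)
    (hμ_dens : ∀ i ∈ S, μ i = volume.withDensity (fun y => ENNReal.ofReal (p i y)))
    (hmom : ∀ i ∈ S, Integrable (fun y => ‖y‖ ^ 2) (μ i))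
    (hent : ∀ i ∈ S, Integrable (fun y => Real.log (p i y)) (μ i)) :
    ∃ Pstar : Measure (V → EuclideanSpace ℝ (Fin d)),
      IsProbabilityMeasure Pstar ∧
      (∀ i ∈ S, Pstar.map (fun x => x i) = μ i) ∧
      KL Pstar Q ≠ ⊤ ∧
      (∀ P : Measure (V → EuclideanSpace ℝ (Fin d)), IsProbabilityMeasure P →
        (∀ i ∈ S, P.map (fun x => x i) = μ i) → KL Pstar Q ≤ KL P Q) ∧
      (∀ P : Measure (V → EuclideanSpace ℝ (Fin d)), IsProbabilityMeasure P →
        (∀ i ∈ S, P.map (fun x => x i) = μ i) →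
        (∀ P' : Measure (V → EuclideanSpace ℝ (Fin d)), IsProbabilityMeasure P' →
          (∀ i ∈ S, P'.map (fun x => x i) = μ i) → KL P Q ≤ KL P' Q) →
        P = Pstar) := by
  obtain ⟨i0, hi0⟩ := hS
  have hc : ∀ e ∈ G.edgeFinset, 0 < 2 * σ ^ 2 * T e := fun e he => by
    have := hT_pos e he; positivity
  set K : ℝ := ∏ e ∈ G.edgeFinset, (2 * Real.pi * σ ^ 2 * T e) ^ (-(d : ℝ) / 2) with hK
  have hK0 : 0 < K := Finset.prod_pos fun e he => by
    have := hT_pos e he; have := Real.pi_pos; positivity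
  set A : (V → EuclideanSpace ℝ (Fin d)) → ℝ :=
    fun x => ∑ e ∈ G.edgeFinset, sqDist x e / (2 * σ ^ 2 * T e) with hA
  set q : (V → EuclideanSpace ℝ (Fin d)) → ℝ := fun x => K * Real.exp (-A x) with hq
  have hQ' : Q = volume.withDensity fun x => ENNReal.ofReal (q x) := by
    rw [hQ]
    congr 1
    funext x
    congr 1
    rw [Finset.prod_mul_distrib, ← Real.exp_sum, hq, hA]
    simp only [hK, neg_div, Finset.sum_neg_distrib]
  have hAc : Continuous A := by
    refine continuous_finsetSum _ fun e _ => ?_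
    exact (tsb_sqDist_continuous e).div_const _
  have hqc : Continuous q := continuous_const.mul (Real.continuous_exp.comp hAc.neg)
  have hq0 : ∀ x, 0 < q x := fun x => mul_pos hK0 (Real.exp_pos _)
  have hqm : Measurable fun x => ENNReal.ofReal (q x) := hqc.measurable.ennreal_ofReal
  have hsf : SigmaFinite Q := by
    rw [hQ']; exact SigmaFinite.withDensity_ofReal _
  have hQne : NeZero Q := by
    refine ⟨fun h0 => ?_⟩
    have hv : (volume : Measure (V → EuclideanSpace ℝ (Fin d))) ≪ Q := by
      rw [hQ']
      exact withDensity_absolutelyContinuous' hqm.aemeasurable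
        (Filter.Eventually.of_forall fun x => by simpa using hq0 x)
    rw [h0, Measure.absolutelyContinuous_zero_iff] at hv
    exact (NeZero.ne (volume : Measure (V → EuclideanSpace ℝ (Fin d)))) hv
  set φ : (V → EuclideanSpace ℝ (Fin d)) → ℝ := fun x => -‖x i0‖ ^ 2 with hφ
  have hφc : Continuous φ := by fun_prop
  have hφQ : Integrable (fun x => Real.exp (φ x)) Q := by
    obtain ⟨k, hk, hcoer⟩ := tsb_coercive (d := d) G hG.connected _ hc i0
    rw [hQ', integrable_withDensity_iff_integrable_smul' hqm
      (Filter.Eventually.of_forall fun x => ENNReal.ofReal_lt_top)]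
    refine ((tsb_gauss_integrable hk).const_mul K).mono' (by
      apply Measurable.aestronglyMeasurable; have := hφc.measurable; fun_prop) ?_
    refine Filter.Eventually.of_forall fun x => ?_
    rw [ENNReal.toReal_ofReal (hq0 x).le, smul_eq_mul, Real.norm_of_nonneg
      (mul_nonneg (hq0 x).le (Real.exp_pos _).le), hq]
    simp only
    rw [mul_assoc, ← Real.exp_add]
    have := hcoer x
    gcongr
    simp only [hφ, hA]
    linarith
  have hφP : ∀ P : Measure (V → EuclideanSpace ℝ (Fin d)), IsProbabilityMeasure P →
      (∀ i ∈ S, P.map (fun x => x i) = μ i) →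
      Integrable φ P ∧ ∫ x, φ x ∂P = ∫ y, -‖y‖ ^ 2 ∂(μ i0) := by
    intro P _ hP
    have h := (hmom i0 hi0).neg
    rw [← hP i0 hi0] at h ⊢
    refine ⟨h.comp_measurable (measurable_pi_apply i0), ?_⟩
    rw [integral_map (measurable_pi_apply i0).aemeasurable (by fun_prop)]
  set r : ℝ := ∫ y, -‖y‖ ^ 2 ∂(μ i0) - Real.log (∫ x, Real.exp (φ x) ∂Q) with hr
  have hKL : ∀ P : Measure (V → EuclideanSpace ℝ (Fin d)), IsProbabilityMeasure P →
      (∀ i ∈ S, P.map (fun x => x i) = μ i) →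
      KL P Q = (InformationTheory.klDiv P (Q.tilted φ) : EReal) + (r : EReal) := by
    intro P hP1 hP2
    obtain ⟨h1, h2⟩ := hφP P hP1 hP2
    rw [tsb_KL_eq P Q hφQ h1, h2]
  have hprobR := isProbabilityMeasure_tilted hφQ
  have hKLtop : ∀ P : Measure (V → EuclideanSpace ℝ (Fin d)), IsProbabilityMeasure P →
      (∀ i ∈ S, P.map (fun x => x i) = μ i) →
      (KL P Q ≠ ⊤ ↔ InformationTheory.klDiv P (Q.tilted φ) ≠ ∞) := by
    intro P hP1 hP2
    rw [hKL P hP1 hP2]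
    by_cases h : InformationTheory.klDiv P (Q.tilted φ) = ∞
    · rw [h]; simp
    · rw [← EReal.coe_ennreal_toReal h, ← EReal.coe_add]
      simp [h, EReal.coe_ne_top, -EReal.coe_add]
  have hKLle : ∀ P P' : Measure (V → EuclideanSpace ℝ (Fin d)), IsProbabilityMeasure P →
      (∀ i ∈ S, P.map (fun x => x i) = μ i) → IsProbabilityMeasure P' →
      (∀ i ∈ S, P'.map (fun x => x i) = μ i) →
      (KL P Q ≤ KL P' Q ↔ InformationTheory.klDiv P (Q.tilted φ)
        ≤ InformationTheory.klDiv P' (Q.tilted φ)) := by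
    intro P P' hP1 hP2 hP1' hP2'
    rw [hKL P hP1 hP2, hKL P' hP1' hP2', ← EReal.coe_ennreal_le_coe_ennreal_iff]
    refine ⟨fun h => ?_, fun h => add_le_add_left h _⟩
    have h' := EReal.sub_le_sub h (le_refl (r : EReal))
    rwa [EReal.add_sub_cancel_right, EReal.add_sub_cancel_right] at h'
  -- a competitor with finite divergence
  have hex : ∃ P : Measure (V → EuclideanSpace ℝ (Fin d)), IsProbabilityMeasure P ∧
      (∀ i ∈ S, P.map (fun x => x i) = μ i) ∧
      InformationTheory.klDiv P (Q.tilted φ) ≠ ∞ := by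
    set τ : V → V := fun i => if i ∈ S then i else i0 with hτ
    have hτS : ∀ i, τ i ∈ S := fun i => by
      by_cases h : i ∈ S <;> simp [hτ, h, hi0]
    have hpr : ∀ i, IsProbabilityMeasure
        ((volume : Measure (EuclideanSpace ℝ (Fin d))).withDensity
          fun y => ENNReal.ofReal (p (τ i) y)) := fun i => by
      rw [← hμ_dens _ (hτS i)]; exact hμ_prob _ (hτS i)
    have hpi := tsb_pi_withDensity (fun i => p (τ i)) (fun i => hp_meas _ (hτS i))
      (fun i => hp_nonneg _ (hτS i))
    have hmarg : ∀ i ∈ S, (Measure.pi fun i =>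
        (volume : Measure (EuclideanSpace ℝ (Fin d))).withDensity
          fun y => ENNReal.ofReal (p (τ i) y)).map (fun x => x i) = μ i := by
      intro i hi
      have h1 := (measurePreserving_eval (fun i =>
        (volume : Measure (EuclideanSpace ℝ (Fin d))).withDensity
          fun y => ENNReal.ofReal (p (τ i) y)) i).map_eq
      have h2 : τ i = i := by simp [hτ, hi]
      rw [hμ_dens i hi]
      conv_rhs => rw [← h2]
      exact h1
    have hev : ∀ i, (Measure.pi fun i =>
        (volume : Measure (EuclideanSpace ℝ (Fin d))).withDensity
          fun y => ENNReal.ofReal (p (τ i) y)).map (fun x => x i) = μ (τ i) := by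
      intro i
      rw [hμ_dens _ (hτS i)]
      exact (measurePreserving_eval (fun i =>
        (volume : Measure (EuclideanSpace ℝ (Fin d))).withDensity
          fun y => ENNReal.ofReal (p (τ i) y)) i).map_eq
    set P : Measure (V → EuclideanSpace ℝ (Fin d)) := Measure.pi fun i =>
        (volume : Measure (EuclideanSpace ℝ (Fin d))).withDensity
          fun y => ENNReal.ofReal (p (τ i) y) with hP
    have hPprob : IsProbabilityMeasure P := by rw [hP]; infer_instance
    refine ⟨P, hPprob, hmarg, (hKLtop P hPprob hmarg).1 ?_⟩
    have hFm : Measurable fun x : V → EuclideanSpace ℝ (Fin d) => ∏ i, p (τ i) (x i) :=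
      Finset.measurable_prod _ fun i _ => (hp_meas _ (hτS i)).comp (measurable_pi_apply i)
    rw [hQ']
    refine tsb_finite volume _ q hFm hqc.measurable
      (fun x => Finset.prod_nonneg fun i _ => hp_nonneg _ (hτS i) _) hq0 P hpi ?_
    refine Integrable.sub ?_ ?_
    · have hne : ∀ᵐ x ∂P, ∏ i, p (τ i) (x i) ≠ 0 := by
        rw [hpi, ae_withDensity_iff hFm.ennreal_ofReal]
        refine Filter.Eventually.of_forall fun x hx h0 => hx (by simp [h0])
      have h1 : Integrable (fun x => ∑ i, Real.log (p (τ i) (x i))) P := by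
        refine integrable_finsetSum _ fun i _ => ?_
        have h := hent _ (hτS i)
        rw [← hev i] at h
        exact h.comp_measurable (measurable_pi_apply i)
      refine h1.congr ?_
      filter_upwards [hne] with x hx
      rw [Real.log_prod]
      intro i hi h0
      exact hx (Finset.prod_eq_zero hi h0)
    · have hsq : ∀ i, Integrable (fun x => ‖x i‖ ^ 2) P := by
        intro i
        have h := hmom _ (hτS i)
        rw [← hev i] at h
        exact h.comp_measurable (measurable_pi_apply i)
      have hAi : Integrable A P := by
        refine integrable_finsetSum _ fun e _ => Integrable.div_const ?_ _
        induction e with | _ u v =>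
        refine (((hsq u).const_mul 2).add ((hsq v).const_mul 2)).mono'
          (tsb_sqDist_continuous _).measurable.aestronglyMeasurable
          (Filter.Eventually.of_forall fun x => ?_)
        rw [Real.norm_of_nonneg (tsb_sqDist_nonneg _ _), tsb_sqDist_mk]
        have h := norm_sub_le (x u) (x v)
        simp only [Pi.add_apply]
        nlinarith [sq_nonneg (‖x u‖ - ‖x v‖), norm_nonneg (x u - x v)]
      refine ((integrable_const (Real.log K)).sub hAi).congr
        (Filter.Eventually.of_forall fun x => ?_)
      simp only [hq, Pi.sub_apply]
      rw [Real.log_mul hK0.ne' (Real.exp_pos _).ne', Real.log_exp]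
      ring
  obtain ⟨Ps, h1, h2, h3, h4, h5⟩ := tsb_min_measure (Q.tilted φ) S ⟨i0, hi0⟩
    (fun i (x : V → EuclideanSpace ℝ (Fin d)) => x i) (fun i => measurable_pi_apply i) μ hμ_prob hex
  refine ⟨Ps, h1, h2, (hKLtop Ps h1 h2).2 h3, fun P hP1 hP2 =>
    (hKLle Ps P h1 h2 hP1 hP2).2 (h4 P hP1 hP2), fun P hP1 hP2 hmin => h5 P hP1 hP2 ?_⟩
  intro P' hP1' hP2'
  exact (hKLle P P' hP1 hP2 hP1' hP2').1 (hmin P' hP1' hP2')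
end
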